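/- Over the two-letter alphabet {a, b}, the language a* ∪ b* is recognized by some one-way reversible automaton with multiple initial states (MRFA) having two initial states, but is not recognized by any sweeping reversible automaton (sRFA). -/

import Mathlib

open scoped Classical

/-- Run a partial transition function along a word. -/
def runP {A Q : Type} (d : A → Q → Option Q) (q : Q) (w : List A) : Option Q :=
  w.foldl (fun o a => o.bind (d a)) (some q)

/-- One-way reversible finite automaton (1RFA): a partial deterministic automaton
with a single initial state and injective transition functions. -/
structure RFA (A Q : Type) where
  start : Q
  next : A → Q → Option Q
  inj : ∀ a q q' r, next a q = some r → next a q' = some r → q = q'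
  accept : Set Q

def RFA.Language {A Q : Type} (M : RFA A Q) : Set (List A) :=
  {w | ∃ qf ∈ M.accept, runP M.next M.start w = some qf}

/-- A permutation automaton (1PerFA): every transition function is a totally
defined bijection. -/
def RFA.IsPerm {A Q : Type} (M : RFA A Q) : Prop :=
  (∀ a q, (M.next a q).isSome) ∧ ∀ a r, ∃ q, M.next a q = some r

/-- One-way reversible finite automaton with multiple initial states (MRFA). -/
structure MRFA (A Q : Type) where
  init : Set Q
  next : A → Q → Option Q
  inj : ∀ a q q' r, next a q = some r → next a q' = some r → q = q'
  accept : Set Q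

def MRFA.Language {A Q : Type} (M : MRFA A Q) : Set (List A) :=
  {w | ∃ q0 ∈ M.init, ∃ qf ∈ M.accept, runP M.next q0 w = some qf}

def Rec1RFA (A : Type) (L : Set (List A)) : Prop :=
  ∃ (Q : Type) (_ : Fintype Q) (M : RFA A Q), M.Language = L

def Rec1RFA1 (A : Type) (L : Set (List A)) : Prop :=
  ∃ (Q : Type) (_ : Fintype Q) (M : RFA A Q), M.accept.ncard = 1 ∧ M.Language = L

def Rec1PerFA (A : Type) (L : Set (List A)) : Prop :=
  ∃ (Q : Type) (_ : Fintype Q) (M : RFA A Q), M.IsPerm ∧ M.Language = L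

def Rec1PerFA1 (A : Type) (L : Set (List A)) : Prop :=
  ∃ (Q : Type) (_ : Fintype Q) (M : RFA A Q),
    M.IsPerm ∧ M.accept.ncard = 1 ∧ M.Language = L

def RecMRFA (A : Type) (L : Set (List A)) : Prop :=
  ∃ (Q : Type) (_ : Fintype Q) (M : MRFA A Q), M.Language = L

/-- Sweeping reversible automaton (sRFA), given without its accepting set:
states `Qp` move rightwards, states `Qm` move leftwards; `startT` is the
transition of the left end-marker function on the initial state, `turnL` its
restriction to `Qm`, and `turnR` is the transition function at the right
end-marker.  All transition functions are partial and injective, and the left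
end-marker function is injective on the whole of `{q₀} ∪ Q₋`. -/
structure SRFA (A Qp Qm : Type) where
  start : Qp
  nextP : A → Qp → Option Qp
  nextM : A → Qm → Option Qm
  startT : Option Qp
  turnL : Qm → Option Qp
  turnR : Qp → Option Qm
  injP : ∀ a q q' r, nextP a q = some r → nextP a q' = some r → q = q'
  injM : ∀ a q q' r, nextM a q = some r → nextM a q' = some r → q = q'
  injL : ∀ q q' r, turnL q = some r → turnL q' = some r → q = q'
  injR : ∀ q q' r, turnR q = some r → turnR q' = some r → q = q'
  startT_ne_turnL : ∀ q r, startT = some r → turnL q ≠ some r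

/-- One step of a sweeping automaton on input `⊢w⊣`: a configuration is a state
together with a head position in `{0, 1, …, |w| + 1}`, where position `0` is the
left end-marker, position `i` with `1 ≤ i ≤ |w|` carries the `i`-th input
symbol, and position `|w| + 1` is the right end-marker.  The result is `none`
when the corresponding transition is undefined and the computation halts. -/
noncomputable def SRFA.step {A Qp Qm : Type} (M : SRFA A Qp Qm) (w : List A) :
    (Qp ⊕ Qm) × ℕ → Option ((Qp ⊕ Qm) × ℕ)
  | (Sum.inl q, i) =>
      if i = 0 then
        if q = M.start then M.startT.map (fun p => (Sum.inl p, 1)) else none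
      else if i = w.length + 1 then
        (M.turnR q).map (fun r => (Sum.inr r, w.length))
      else
        (w[i - 1]?.bind (fun a => M.nextP a q)).map (fun p => (Sum.inl p, i + 1))
  | (Sum.inr q, i) =>
      if i = 0 then (M.turnL q).map (fun p => (Sum.inl p, 1))
      else if i = w.length + 1 then none
      else (w[i - 1]?.bind (fun a => M.nextM a q)).map (fun r => (Sum.inr r, i - 1))

/-- The configuration reached after `n` steps of the computation on `w`,
starting in the initial state at the left end-marker (or `none` if the
computation has halted before). -/
noncomputable def SRFA.steps {A Qp Qm : Type} (M : SRFA A Qp Qm) (w : List A) :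
    ℕ → Option ((Qp ⊕ Qm) × ℕ)
  | 0 => some (Sum.inl M.start, 0)
  | n + 1 => (M.steps w n).bind (M.step w)

/-- Acceptance of an ordinary sRFA: the computation halts at the right
end-marker in an accepting state `q ∈ F ⊆ Q₊`. -/
def SRFA.AcceptsR {A Qp Qm : Type} (M : SRFA A Qp Qm) (F : Set Qp) (w : List A) : Prop :=
  ∃ n q, M.steps w n = some (Sum.inl q, w.length + 1) ∧ q ∈ F ∧
    M.step w (Sum.inl q, w.length + 1) = none

def SRFA.LangR {A Qp Qm : Type} (M : SRFA A Qp Qm) (F : Set Qp) : Set (List A) :=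
  {w | M.AcceptsR F w}

/-- Acceptance of an sRFA with acceptance at both sides: the computation halts
at either end-marker in an accepting state `c ∈ F ⊆ Q₊ ∪ Q₋`. -/
def SRFA.AcceptsB {A Qp Qm : Type} (M : SRFA A Qp Qm) (F : Set (Qp ⊕ Qm)) (w : List A) : Prop :=
  ∃ n c i, M.steps w n = some (c, i) ∧ c ∈ F ∧ (i = 0 ∨ i = w.length + 1) ∧
    M.step w (c, i) = none

def SRFA.LangB {A Qp Qm : Type} (M : SRFA A Qp Qm) (F : Set (Qp ⊕ Qm)) : Set (List A) :=
  {w | M.AcceptsB F w}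

def RecSRFA (A : Type) (L : Set (List A)) : Prop :=
  ∃ (Qp Qm : Type) (_ : Fintype Qp) (_ : Fintype Qm) (M : SRFA A Qp Qm) (F : Set Qp),
    M.LangR F = L

/-- The language `a* ∪ b*` over the two-letter alphabet `{a, b}` (with
`a = false` and `b = true`). -/
def LaStarbStar : Set (List Bool) :=
  {w | ∀ c ∈ w, c = false} ∪ {w | ∀ c ∈ w, c = true}

/-!
The automaton with one state per letter, all of them initial and accepting and each looping on its
own letter only, reads exactly the words over a single letter.

Conversely, let a sweeping reversible automaton `M` accept all powers of `u` and of `v`. Every word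
has a positive power acting idempotently on the finitely many states, and an idempotent partial
injection is a restriction of the identity; so some `x = u ^ m` and `y = v ^ n` with `m, n > 0` act
as partial identities in both directions. As `M` accepts `x`, no sweep over `x` gets stuck, hence
every sweep in the computation on `x` returns the state it started in, and this computation takes
the same turns as the one on the empty word. The same holds for `y`, hence for `x ++ y`, which is
accepted because the empty word is.
-/

theorem exists_pos_pow_isIdempotentElem {S : Type*} [Monoid S] [Finite S] (x : S) :
    ∃ n, 0 < n ∧ IsIdempotentElem (x ^ n) := by
  let _ : TopologicalSpace S := ⊥
  have : DiscreteTopology S := ⟨rfl⟩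
  obtain ⟨_, ⟨n, rfl⟩, hn⟩ := exists_idempotent_in_compact_subsemigroup
    (fun _ => continuous_of_discreteTopology) (Set.range fun n : ℕ => x ^ (n + 1))
    (Set.range_nonempty _) (Set.toFinite _).isCompact <| by
      rintro _ ⟨k, rfl⟩ _ ⟨l, rfl⟩
      exact ⟨k + 1 + l, by simp only [← pow_add, add_assoc]⟩
  exact ⟨n + 1, n.succ_pos, hn⟩

section PartialRun

variable {A Q : Type} (d : A → Q → Option Q)

theorem runP_nil (q : Q) : runP d q [] = some q := rfl

theorem foldl_bind_none (w : List A) : w.foldl (fun o a => o.bind (d a)) none = none := by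
  induction w with
  | nil => rfl
  | cons _ _ ih => exact ih

theorem runP_append (q : Q) (u v : List A) :
    runP d q (u ++ v) = (runP d q u).bind fun r => runP d r v := by
  rw [runP, List.foldl_append, ← runP]
  cases runP d q u with
  | none => exact foldl_bind_none d v
  | some r => rfl

theorem runP_cons (q : Q) (a : A) (w : List A) :
    runP d q (a :: w) = (d a q).bind fun r => runP d r w :=
  runP_append d q [a] w

variable {d}

theorem runP_inj (hd : ∀ a q q' r, d a q = some r → d a q' = some r → q = q') {w : List A}
    {q q' r : Q} (h : runP d q w = some r) (h' : runP d q' w = some r) : q = q' := by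
  induction w generalizing q q' with
  | nil => exact Option.some_injective _ (h.trans h'.symm)
  | cons _ _ ih =>
    rw [runP_cons, Option.bind_eq_some_iff] at h h'
    obtain ⟨s, hs, h⟩ := h
    obtain ⟨s', hs', h'⟩ := h'
    obtain rfl := ih h h'
    exact hd _ _ _ _ hs hs'

end PartialRun

namespace SRFA

variable {A Qp Qm : Type} (M : SRFA A Qp Qm) {F : Set Qp} {u v w : List A} {c d : Qp ⊕ Qm}

/-- The transformation of states induced by a sweep over the whole of `w`, rightwards from a state
in `Qp` and leftwards from a state in `Qm`; it is undefined if the sweep gets stuck. -/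
def sweep (w : List A) : Qp ⊕ Qm → Option (Qp ⊕ Qm)
  | Sum.inl p => (runP M.nextP p w).map Sum.inl
  | Sum.inr r => (runP M.nextM r w.reverse).map Sum.inr

/-- The transformation of states at the end-marker reached by a sweep: the right one for a state in
`Qp`, the left one for a state in `Qm`. -/
def turn : Qp ⊕ Qm → Option (Qp ⊕ Qm)
  | Sum.inl p => (M.turnR p).map Sum.inr
  | Sum.inr r => (M.turnL r).map Sum.inl

section Sweep

theorem sweep_nil (c : Qp ⊕ Qm) : M.sweep [] c = some c := by
  cases c <;> rfl

theorem sweep_flatten_replicate_succ (w : List A) (n : ℕ) (c : Qp ⊕ Qm) :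
    M.sweep (List.replicate (n + 1) w).flatten c =
      (M.sweep w c).bind (M.sweep (List.replicate n w).flatten) := by
  cases c with
  | inl p =>
    rw [List.replicate_succ, List.flatten_cons, sweep, sweep, runP_append]
    cases runP M.nextP p w <;> rfl
  | inr r =>
    rw [List.replicate_succ', List.flatten_concat, sweep, sweep, List.reverse_append, runP_append]
    cases runP M.nextM r w.reverse <;> rfl

variable {M} in
theorem sweep_append_eq_self (hu : M.sweep u c = some c) (hv : M.sweep v c = some c) :
    M.sweep (u ++ v) c = some c := by
  cases c <;> simp_all [sweep, runP_append]

variable {M} in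
theorem sweep_inj {e : Qp ⊕ Qm} (hc : M.sweep w c = some e) (hd : M.sweep w d = some e) :
    c = d := by
  cases c <;> cases d <;> simp only [sweep, Option.map_eq_some_iff] at hc hd <;>
    obtain ⟨q, hq, rfl⟩ := hc <;> obtain ⟨q', hq', h⟩ := hd <;> cases h
  · rw [runP_inj M.injP hq hq']
  · rw [runP_inj M.injM hq hq']

/-- The total transformation induced by a sweep over `w`, with `none` as a sink. It is an element of
a monoid, in which powers can be formed. -/
def sweepMap (w : List A) : Function.End (Option (Qp ⊕ Qm)) :=
  fun o => o.bind (M.sweep w)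

theorem sweepMap_pow (w : List A) (n : ℕ) :
    M.sweepMap w ^ n = M.sweepMap (List.replicate n w).flatten := by
  induction n with
  | zero =>
    funext o
    cases o with
    | none => rfl
    | some c => exact (M.sweep_nil c).symm
  | succ n ih =>
    rw [pow_succ, ih]
    funext o
    cases o with
    | none => rfl
    | some c => exact (M.sweep_flatten_replicate_succ w n c).symm

/-- The word `w` acts on the states as a restriction of the identity, in both directions. -/
def ActsAsPartialId (w : List A) : Prop :=
  ∀ ⦃c d⦄, M.sweep w c = some d → d = c

variable {M} in
theorem actsAsPartialId_of_isIdempotentElem (h : IsIdempotentElem (M.sweepMap w)) :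
    M.ActsAsPartialId w := by
  intro c d hc
  have hd : M.sweep w d = some d := by
    have happly : (M.sweep w c).bind (M.sweep w) = M.sweep w c := congrFun h (some c)
    rwa [hc] at happly
  exact sweep_inj hd hc

theorem exists_pos_actsAsPartialId_flatten_replicate [Finite Qp] [Finite Qm] (w : List A) :
    ∃ n, 0 < n ∧ M.ActsAsPartialId (List.replicate n w).flatten := by
  have : Finite (Function.End (Option (Qp ⊕ Qm))) :=
    inferInstanceAs (Finite (Option (Qp ⊕ Qm) → Option (Qp ⊕ Qm)))
  obtain ⟨n, hn, h⟩ := exists_pos_pow_isIdempotentElem (M.sweepMap w)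
  exact ⟨n, hn, actsAsPartialId_of_isIdempotentElem (M.sweepMap_pow w n ▸ h)⟩

end Sweep

/-- The configuration `x` occurs in the computation on `w`. -/
def Reaches (w : List A) (x : (Qp ⊕ Qm) × ℕ) : Prop :=
  ∃ n, M.steps w n = some x

section Reaches

variable {M} {x y : (Qp ⊕ Qm) × ℕ}

theorem Reaches.step (hx : M.Reaches w x) (h : M.step w x = some y) : M.Reaches w y := by
  obtain ⟨n, hn⟩ := hx
  exact ⟨n + 1, by rw [steps, hn, Option.bind_some, h]⟩

theorem steps_add_succ_eq_none {n : ℕ} (hn : M.steps w n = some x) (hx : M.step w x = none)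
    (k : ℕ) : M.steps w (n + k + 1) = none := by
  induction k with
  | zero => rw [add_zero, steps, hn, Option.bind_some, hx]
  | succ k ih => rw [← add_assoc, steps, ih, Option.bind_none]

theorem Reaches.eq_of_step_eq_none (hx : M.Reaches w x) (hy : M.Reaches w y)
    (hx' : M.step w x = none) (hy' : M.step w y = none) : x = y := by
  obtain ⟨n, hn⟩ := hx
  obtain ⟨m, hm⟩ := hy
  rcases lt_trichotomy n m with hlt | rfl | hlt
  · obtain ⟨k, rfl⟩ := Nat.exists_eq_add_of_lt hlt
    cases hm.symm.trans (steps_add_succ_eq_none hn hx' k)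
  · exact Option.some_injective _ (hn.symm.trans hm)
  · obtain ⟨k, rfl⟩ := Nat.exists_eq_add_of_lt hlt
    cases hn.symm.trans (steps_add_succ_eq_none hm hy' k)

theorem AcceptsR.position_eq_of_step_eq_none (hw : M.AcceptsR F w) (hx : M.Reaches w x)
    (hx' : M.step w x = none) : x.2 = w.length + 1 := by
  obtain ⟨n, q, hn, -, hq⟩ := hw
  rw [hx.eq_of_step_eq_none ⟨n, hn⟩ hx' hq]

section Run

-- A sweep reads the letters of `l`, which is `w` or `w.reverse`, and `conf k q` is its
-- configuration in the state `q` after `k` letters.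
variable {Q : Type} {δ : A → Q → Option Q} {l : List A} {conf : ℕ → Q → (Qp ⊕ Qm) × ℕ} {q : Q}

theorem Reaches.of_runP_eq_some {r : Q}
    (hstep : ∀ k (hk : k < l.length) q,
      M.step w (conf k q) = (δ l[k] q).map (conf (k + 1)))
    (hq : M.Reaches w (conf 0 q)) (hr : runP δ q l = some r) :
    M.Reaches w (conf l.length r) := by
  induction l generalizing conf q with
  | nil =>
    cases hr
    exact hq
  | cons a l ih =>
    rw [runP_cons, Option.bind_eq_some_iff] at hr
    obtain ⟨s, hs, hr⟩ := hr
    have hqs : M.step w (conf 0 q) = some (conf 1 s) := by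
      rw [hstep 0 l.length.succ_pos, List.getElem_cons_zero, hs, Option.map_some]
    exact ih (conf := fun k => conf (k + 1))
      (fun k hk => hstep (k + 1) (Nat.succ_lt_succ hk)) (hq.step hqs) hr

theorem Reaches.exists_step_eq_none_of_runP_eq_none
    (hstep : ∀ k (hk : k < l.length) q,
      M.step w (conf k q) = (δ l[k] q).map (conf (k + 1)))
    (hq : M.Reaches w (conf 0 q)) (hr : runP δ q l = none) :
    ∃ k < l.length, ∃ s, M.Reaches w (conf k s) ∧ M.step w (conf k s) = none := by
  induction l generalizing conf q with
  | nil => cases hr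
  | cons a l ih =>
    have hqa : M.step w (conf 0 q) = (δ a q).map (conf 1) := hstep 0 l.length.succ_pos q
    cases hs : δ a q with
    | none => exact ⟨0, l.length.succ_pos, q, hq, by rw [hqa, hs, Option.map_none]⟩
    | some s =>
      rw [runP_cons, hs, Option.bind_some] at hr
      obtain ⟨k, hk, ht⟩ := ih (conf := fun k => conf (k + 1))
        (fun k hk => hstep (k + 1) (Nat.succ_lt_succ hk))
        (hq.step (by rw [hqa, hs, Option.map_some])) hr
      exact ⟨k + 1, Nat.succ_lt_succ hk, ht⟩

end Run

/-- The configuration in which a sweep over `w` starts in the state `c`: the head has just left the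
end-marker. -/
def entryConfig (w : List A) : Qp ⊕ Qm → (Qp ⊕ Qm) × ℕ
  | Sum.inl p => (Sum.inl p, 1)
  | Sum.inr r => (Sum.inr r, w.length)

/-- The configuration in which a sweep over `w` ends in the state `c`: the head is at the opposite
end-marker. -/
def exitConfig (w : List A) : Qp ⊕ Qm → (Qp ⊕ Qm) × ℕ
  | Sum.inl p => (Sum.inl p, w.length + 1)
  | Sum.inr r => (Sum.inr r, 0)

theorem exitConfig_nil (c : Qp ⊕ Qm) :
    exitConfig ([] : List A) c = entryConfig ([] : List A) c := by
  cases c <;> rfl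

variable (M) in
theorem step_start (w : List A) :
    M.step w (Sum.inl M.start, 0) = M.startT.map fun p => entryConfig w (Sum.inl p) := by
  simp [step, entryConfig]

variable (M) in
theorem step_exitConfig (w : List A) (c : Qp ⊕ Qm) :
    M.step w (exitConfig w c) = (M.turn c).map (entryConfig w) := by
  cases c <;> simp [step, exitConfig, turn, Function.comp_def, entryConfig]

variable (M) in
theorem step_rightwards (k : ℕ) (hk : k < w.length) (p : Qp) :
    M.step w (Sum.inl p, k + 1) =
      (M.nextP w[k] p).map fun q => (Sum.inl q, k + 1 + 1) := by
  simp [step, hk, hk.ne]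

variable (M) in
theorem step_leftwards (k : ℕ) (hk : k < w.reverse.length) (r : Qm) :
    M.step w (Sum.inr r, w.length - k) =
      (M.nextM w.reverse[k] r).map fun s => (Sum.inr s, w.length - (k + 1)) := by
  rw [List.length_reverse] at hk
  have hpos : w.length - k ≠ 0 := Nat.sub_ne_zero_of_lt hk
  have hlt : w.length - (k + 1) < w.length := by omega
  have hne : w.length - k ≠ w.length + 1 := by omega
  simp [step, hpos, hlt, hne, List.getElem_reverse, Nat.sub_sub, Nat.add_comm 1 k]

theorem Reaches.exitConfig (hc : M.Reaches w (entryConfig w c)) (h : M.sweep w c = some d) :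
    M.Reaches w (exitConfig w d) := by
  cases c with
  | inl p =>
    obtain ⟨q, hq, rfl⟩ := Option.map_eq_some_iff.1 h
    exact hc.of_runP_eq_some (conf := fun k q => (Sum.inl q, k + 1)) M.step_rightwards hq
  | inr r =>
    obtain ⟨s, hs, rfl⟩ := Option.map_eq_some_iff.1 h
    simpa [SRFA.exitConfig] using hc.of_runP_eq_some (conf := fun k s => (Sum.inr s, w.length - k))
      M.step_leftwards hs

theorem AcceptsR.sweep_ne_none (hw : M.AcceptsR F w) (hc : M.Reaches w (entryConfig w c)) :
    M.sweep w c ≠ none := by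
  intro h
  cases c with
  | inl p =>
    obtain ⟨k, hk, q, hq, hq'⟩ := hc.exists_step_eq_none_of_runP_eq_none
      (conf := fun k q => (Sum.inl q, k + 1)) M.step_rightwards (Option.map_eq_none_iff.1 h)
    have := hw.position_eq_of_step_eq_none hq hq'
    omega
  | inr r =>
    obtain ⟨k, -, s, hs, hs'⟩ := hc.exists_step_eq_none_of_runP_eq_none
      (conf := fun k s => (Sum.inr s, w.length - k)) M.step_leftwards (Option.map_eq_none_iff.1 h)
    have := hw.position_eq_of_step_eq_none hs hs'
    omega

end Reaches

/-- The states in which `M` passes through the empty word in its computation on it. When the sweeps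
over `w` fix these states, they are also the states in which `M` sweeps over `w`. -/
inductive NilReachable : Qp ⊕ Qm → Prop
  | start {p : Qp} : M.startT = some p → NilReachable (Sum.inl p)
  | turn {c d : Qp ⊕ Qm} : NilReachable c → M.turn c = some d → NilReachable d

section NilReachable

variable {M}

theorem eq_start_or_nilReachable_of_steps_nil {n : ℕ} {x : (Qp ⊕ Qm) × ℕ}
    (hn : M.steps [] n = some x) :
    x = (Sum.inl M.start, 0) ∨ ∃ c, x = exitConfig ([] : List A) c ∧ M.NilReachable c := by
  induction n generalizing x with
  | zero => exact Or.inl (Option.some_injective _ hn).symm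
  | succ n ih =>
    right
    obtain ⟨y, hy, hyx⟩ := Option.bind_eq_some_iff.1 hn
    rcases ih hy with rfl | ⟨c, rfl, hc⟩
    · rw [step_start, Option.map_eq_some_iff] at hyx
      obtain ⟨p, hp, rfl⟩ := hyx
      exact ⟨Sum.inl p, (exitConfig_nil _).symm, .start hp⟩
    · rw [step_exitConfig, Option.map_eq_some_iff] at hyx
      obtain ⟨d, hd, rfl⟩ := hyx
      exact ⟨d, (exitConfig_nil d).symm, hc.turn hd⟩

theorem AcceptsR.exists_nilReachable (h : M.AcceptsR F []) :
    ∃ q ∈ F, M.NilReachable (Sum.inl q) ∧ M.turn (Sum.inl q) = none := by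
  obtain ⟨n, q, hn, hqF, hq⟩ := h
  refine ⟨q, hqF, ?_, Option.map_eq_none_iff.1 ((M.step_exitConfig [] (Sum.inl q)).symm.trans hq)⟩
  rcases eq_start_or_nilReachable_of_steps_nil hn with hstart | ⟨c, hc, hreach⟩
  · cases congrArg Prod.snd hstart
  · cases c <;> cases hc
    exact hreach

-- `hfix` has two premises because for an accepted word the sweep is controlled through the second
-- (no halting inside the word), and for a concatenation through the first.
theorem NilReachable.reaches_entryConfig
    (hfix : ∀ d, M.NilReachable d → M.Reaches w (entryConfig w d) → M.sweep w d = some d)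
    (hc : M.NilReachable c) : M.Reaches w (entryConfig w c) := by
  induction hc with
  | start hp =>
    have hstart : M.Reaches w (Sum.inl M.start, 0) := ⟨0, rfl⟩
    exact hstart.step (by rw [step_start, hp, Option.map_some])
  | turn hc hd ih =>
    exact (ih.exitConfig (hfix _ hc ih)).step (by rw [step_exitConfig, hd, Option.map_some])

theorem AcceptsR.sweep_eq_self (hw : M.AcceptsR F w) (hid : M.ActsAsPartialId w)
    (hc : M.NilReachable c) : M.sweep w c = some c := by
  have hfix : ∀ d, M.Reaches w (entryConfig w d) → M.sweep w d = some d := by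
    intro d hd
    obtain ⟨e, he⟩ := Option.ne_none_iff_exists'.1 (hw.sweep_ne_none hd)
    rw [he, hid he]
  exact hfix c (hc.reaches_entryConfig fun d _ => hfix d)

theorem AcceptsR.of_nil (h : M.AcceptsR F [])
    (hfix : ∀ c, M.NilReachable c → M.sweep w c = some c) : M.AcceptsR F w := by
  obtain ⟨q, hqF, hq, hhalt⟩ := h.exists_nilReachable
  have hentry := hq.reaches_entryConfig fun d hd _ => hfix d hd
  obtain ⟨n, hn⟩ := hentry.exitConfig (hfix _ hq)
  refine ⟨n, q, hn, hqF, ?_⟩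
  exact (M.step_exitConfig w (Sum.inl q)).trans (by rw [hhalt, Option.map_none])

theorem AcceptsR.append_of_actsAsPartialId (h : M.AcceptsR F [])
    (hu : M.AcceptsR F u) (hv : M.AcceptsR F v)
    (hidu : M.ActsAsPartialId u) (hidv : M.ActsAsPartialId v) : M.AcceptsR F (u ++ v) :=
  h.of_nil fun _ hc => sweep_append_eq_self (hu.sweep_eq_self hidu hc) (hv.sweep_eq_self hidv hc)

end NilReachable

end SRFA

theorem RecSRFA.exists_pos_flatten_replicate_append_mem {A : Type} {L : Set (List A)}
    (hL : RecSRFA A L) {u v : List A} (hu : ∀ n, (List.replicate n u).flatten ∈ L)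
    (hv : ∀ n, (List.replicate n v).flatten ∈ L) :
    ∃ m n, 0 < m ∧ 0 < n ∧ (List.replicate m u).flatten ++ (List.replicate n v).flatten ∈ L := by
  obtain ⟨Qp, Qm, _, _, M, F, rfl⟩ := hL
  obtain ⟨m, hm, hidm⟩ := M.exists_pos_actsAsPartialId_flatten_replicate u
  obtain ⟨n, hn, hidn⟩ := M.exists_pos_actsAsPartialId_flatten_replicate v
  exact ⟨m, n, hm, hn, SRFA.AcceptsR.append_of_actsAsPartialId (hu 0) (hu m) (hv n) hidm hidn⟩

/-- The automaton with one state per letter, all of them initial and accepting, in which each state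
loops on its own letter and has no other transition. -/
noncomputable def singleLetterMRFA (A : Type) : MRFA A A where
  init := Set.univ
  next a := PEquiv.ofSet {a}
  inj a _ _ _ h h' := (PEquiv.ofSet {a}).inj h h'
  accept := Set.univ

theorem runP_singleLetterMRFA {A : Type} {q r : A} {w : List A} :
    runP (singleLetterMRFA A).next q w = some r ↔ q = r ∧ ∀ c ∈ w, c = q := by
  induction w with
  | nil => simp [runP_nil]
  | cons a w ih =>
    have hnext (s : A) : (singleLetterMRFA A).next a q = some s ↔ s = q ∧ s = a :=
      PEquiv.ofSet_eq_some_iff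
    simp only [runP_cons, Option.bind_eq_some_iff, hnext, List.forall_mem_cons]
    constructor
    · rintro ⟨s, ⟨rfl, rfl⟩, hs⟩
      exact ⟨(ih.1 hs).1, rfl, (ih.1 hs).2⟩
    · rintro ⟨hqr, rfl, hw⟩
      exact ⟨a, ⟨rfl, rfl⟩, ih.2 ⟨hqr, hw⟩⟩

theorem language_singleLetterMRFA (A : Type) :
    (singleLetterMRFA A).Language = {w | ∃ a, ∀ c ∈ w, c = a} := by
  ext w
  simp only [MRFA.Language, Set.mem_ofPred_eq, runP_singleLetterMRFA]
  simp [singleLetterMRFA]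

theorem laStarbStar_eq_setOf_exists : LaStarbStar = {w | ∃ a, ∀ c ∈ w, c = a} := by
  ext w
  simp only [LaStarbStar, Set.mem_union, Set.mem_ofPred_eq, Bool.exists_bool]

theorem replicate_mem_laStarbStar (n : ℕ) (a : Bool) : List.replicate n a ∈ LaStarbStar := by
  rw [laStarbStar_eq_setOf_exists]
  exact ⟨a, fun _ => List.eq_of_mem_replicate⟩

theorem not_recSRFA_laStarbStar : ¬ RecSRFA Bool LaStarbStar := by
  intro hrec
  have hpow (a : Bool) (n : ℕ) : (List.replicate n [a]).flatten ∈ LaStarbStar := by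
    rw [List.flatten_replicate_singleton]
    exact replicate_mem_laStarbStar n a
  obtain ⟨m, n, hm, hn, hmem⟩ :=
    hrec.exists_pos_flatten_replicate_append_mem (hpow false) (hpow true)
  rw [List.flatten_replicate_singleton, List.flatten_replicate_singleton,
    laStarbStar_eq_setOf_exists] at hmem
  obtain ⟨a, ha⟩ := hmem
  have hfalse : false = a := ha false (by simp [hm.ne'])
  have htrue : true = a := ha true (by simp [hn.ne'])
  exact Bool.false_ne_true (hfalse.trans htrue.symm)

/-- `a* ∪ b*` is recognized by some MRFA with two initial states,
but by no sRFA. -/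
theorem stmt11 :
    (∃ (Q : Type) (_ : Fintype Q) (M : MRFA Bool Q),
      M.init.ncard = 2 ∧ M.Language = LaStarbStar) ∧
    ¬ RecSRFA Bool LaStarbStar := by
  refine ⟨⟨Bool, inferInstance, singleLetterMRFA Bool, ?_, ?_⟩, not_recSRFA_laStarbStar⟩
  · simp [singleLetterMRFA]
  · rw [language_singleLetterMRFA, laStarbStar_eq_setOf_exists]
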